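/- arXiv:2505.13051 — 7 statements merged into one kernel-verified Lean document; each statement's English description precedes it below -/
import Mathlib

section
/- Let C be a small category and A an abelian category. Given a sheaf F : Cᵒᵖ ⥤ A and two sub-episheaves (E₁, ι₁) and (E₂, ι₂) of F, there exist an episheaf E₃, a natural transformation ι₃ : E₃ ⟶ F whose components are all monomorphisms, and natural transformations g₁ : E₁ ⟶ E₃ and g₂ : E₂ ⟶ E₃ whose components are all monomorphisms, such that g₁ ≫ ι₃ = ι₁ and g₂ ≫ ι₃ = ι₂. -/
/-!
The join `E₃` is the image of `E₁ ⊞ E₂ ⟶ F`, taken in the abelian category `Cᵒᵖ ⥤ A`. At each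
object the two maps `E₁ ⟶ E₃` and `E₂ ⟶ E₃` are jointly epimorphic, and the restriction maps of
`E₁` and `E₂` are epimorphisms, so naturality makes the restriction maps of `E₃` epimorphisms.
-/

open CategoryTheory CategoryTheory.Limits

universe u v w

theorem sub_episheaf_join {C : Type u} [SmallCategory C] {A : Type v} [Category.{w} A]
    [Abelian A]
    (F E₁ E₂ : Cᵒᵖ ⥤ A) (ι₁ : E₁ ⟶ F) (ι₂ : E₂ ⟶ F)
    (hE₁ : ∀ (X Y : Cᵒᵖ) (f : X ⟶ Y), Epi (E₁.map f))
    (hE₂ : ∀ (X Y : Cᵒᵖ) (f : X ⟶ Y), Epi (E₂.map f))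
    (hι₁ : ∀ X, Mono (ι₁.app X)) (hι₂ : ∀ X, Mono (ι₂.app X)) :
    ∃ (E₃ : Cᵒᵖ ⥤ A) (ι₃ : E₃ ⟶ F) (g₁ : E₁ ⟶ E₃) (g₂ : E₂ ⟶ E₃),
      (∀ (X Y : Cᵒᵖ) (f : X ⟶ Y), Epi (E₃.map f)) ∧
      (∀ X, Mono (ι₃.app X)) ∧
      (∀ X, Mono (g₁.app X)) ∧
      (∀ X, Mono (g₂.app X)) ∧
      g₁ ≫ ι₃ = ι₁ ∧ g₂ ≫ ι₃ = ι₂ := by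
  let d : E₁ ⊞ E₂ ⟶ F := biprod.desc ι₁ ι₂
  let p : E₁ ⊞ E₂ ⟶ image d := factorThruImage d
  let g₁ : E₁ ⟶ image d := biprod.inl ≫ p
  let g₂ : E₂ ⟶ image d := biprod.inr ≫ p
  have h₁ : g₁ ≫ image.ι d = ι₁ := by simp [g₁, p, d]
  have h₂ : g₂ ≫ image.ι d = ι₂ := by simp [g₂, p, d]
  refine ⟨image d, image.ι d, g₁, g₂, ?_, fun X => inferInstance, ?_, ?_, h₁, h₂⟩
  · intro X Y f
    refine ⟨fun {Z} a b hab => ?_⟩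
    have k₁ : g₁.app Y ≫ a = g₁.app Y ≫ b := by
      have := hE₁ X Y f
      rw [← cancel_epi (E₁.map f), NatTrans.naturality_assoc, NatTrans.naturality_assoc, hab]
    have k₂ : g₂.app Y ≫ a = g₂.app Y ≫ b := by
      have := hE₂ X Y f
      rw [← cancel_epi (E₂.map f), NatTrans.naturality_assoc, NatTrans.naturality_assoc, hab]
    -- `p` is the sum of its restrictions to the two summands; evaluating this at `Y` avoids
    -- identifying `(E₁ ⊞ E₂).obj Y` with a biproduct in `A`.
    have hp : p = biprod.fst ≫ g₁ + biprod.snd ≫ g₂ := by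
      apply biprod.hom_ext' <;> simp [g₁, g₂]
    have hpY : p.app Y = (biprod.fst : E₁ ⊞ E₂ ⟶ E₁).app Y ≫ g₁.app Y +
        (biprod.snd : E₁ ⊞ E₂ ⟶ E₂).app Y ≫ g₂.app Y := by
      simpa using congrArg (fun t => NatTrans.app t Y) hp
    have hepi : Epi (p.app Y) := inferInstance
    rw [← cancel_epi (p.app Y), hpY]
    simp only [Preadditive.add_comp, Category.assoc, k₁, k₂]
  · intro X
    have := hι₁ X
    rw [← h₁, NatTrans.comp_app] at this
    exact mono_of_mono _ ((image.ι d).app X)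
  · intro X
    have := hι₂ X
    rw [← h₂, NatTrans.comp_app] at this
    exact mono_of_mono _ ((image.ι d).app X)
end

section
/- Let C be a small category and A an abelian category. Given a cosheaf F : C ⥤ A and two quotient-monocosheaves (M₁, ρ₁) and (M₂, ρ₂) of F, there exist a monocosheaf M₃, a natural transformation ρ₃ : F ⟶ M₃ whose components are all epimorphisms, and natural transformations p₁ : M₃ ⟶ M₁ and p₂ : M₃ ⟶ M₂ whose components are all epimorphisms, such that ρ₃ ≫ p₁ = ρ₁ and ρ₃ ≫ p₂ = ρ₂. -/
/-!
The functor category `C ⥤ A` is abelian, with monomorphisms and epimorphisms detected objectwise.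
Take `M₃` to be the image of `(ρ₁, ρ₂) : F ⟶ M₁ ⊞ M₂`, and `p₁`, `p₂` the restricted projections.
They are epimorphisms because `ρ₁` and `ρ₂` factor through them, and since they are objectwise
jointly monic and the maps of `M₁` and `M₂` are monic, so are the maps of `M₃`.
-/

open CategoryTheory CategoryTheory.Limits

universe u v w

theorem quotient_monocosheaf_meet {C : Type u} [SmallCategory C] {A : Type v} [Category.{w} A]
    [Abelian A]
    (F M₁ M₂ : C ⥤ A) (ρ₁ : F ⟶ M₁) (ρ₂ : F ⟶ M₂)
    (hM₁ : ∀ (X Y : C) (f : X ⟶ Y), Mono (M₁.map f))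
    (hM₂ : ∀ (X Y : C) (f : X ⟶ Y), Mono (M₂.map f))
    (hρ₁ : ∀ X, Epi (ρ₁.app X)) (hρ₂ : ∀ X, Epi (ρ₂.app X)) :
    ∃ (M₃ : C ⥤ A) (ρ₃ : F ⟶ M₃) (p₁ : M₃ ⟶ M₁) (p₂ : M₃ ⟶ M₂),
      (∀ (X Y : C) (f : X ⟶ Y), Mono (M₃.map f)) ∧
      (∀ X, Epi (ρ₃.app X)) ∧
      (∀ X, Epi (p₁.app X)) ∧
      (∀ X, Epi (p₂.app X)) ∧
      ρ₃ ≫ p₁ = ρ₁ ∧ ρ₃ ≫ p₂ = ρ₂ := by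
  let φ : F ⟶ M₁ ⊞ M₂ := biprod.lift ρ₁ ρ₂
  let i : image φ ⟶ M₁ ⊞ M₂ := image.ι φ
  have e₁ : factorThruImage φ ≫ i ≫ biprod.fst = ρ₁ := by
    rw [image.fac_assoc]; exact biprod.lift_fst _ _
  have e₂ : factorThruImage φ ≫ i ≫ biprod.snd = ρ₂ := by
    rw [image.fac_assoc]; exact biprod.lift_snd _ _
  refine ⟨image φ, factorThruImage φ, i ≫ biprod.fst, i ≫ biprod.snd,
    fun X Y f => ⟨fun g h hgh => ?_⟩, fun X => inferInstance, fun X => ?_, fun X => ?_, e₁, e₂⟩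
  · have := hM₁ X Y f
    have := hM₂ X Y f
    -- Both projections to `M₁` and `M₂` agree on `g` and `h`, by naturality and monicity there.
    have h₁ : g ≫ (i ≫ biprod.fst).app X = h ≫ (i ≫ biprod.fst).app X := by
      rw [← cancel_mono (M₁.map f), Category.assoc, Category.assoc, ← NatTrans.naturality,
        reassoc_of% hgh]
    have h₂ : g ≫ (i ≫ biprod.snd).app X = h ≫ (i ≫ biprod.snd).app X := by
      rw [← cancel_mono (M₂.map f), Category.assoc, Category.assoc, ← NatTrans.naturality,
        reassoc_of% hgh]
    -- The identity of `M₁ ⊞ M₂` is a sum of maps through the projections, so the projections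
    -- are jointly monic at each object, without identifying `(M₁ ⊞ M₂).obj X`.
    have ht : i = (i ≫ biprod.fst) ≫ biprod.inl + (i ≫ biprod.snd) ≫ biprod.inr := by
      rw [Category.assoc, Category.assoc, ← Preadditive.comp_add, biprod.total, Category.comp_id]
    have hi : Mono (i.app X) := inferInstance
    rw [← cancel_mono (i.app X), ht, NatTrans.app_add, Preadditive.comp_add, Preadditive.comp_add,
      NatTrans.comp_app _ biprod.inl, NatTrans.comp_app _ biprod.inr,
      reassoc_of% h₁, reassoc_of% h₂]
  · have h := hρ₁ X
    rw [← e₁, NatTrans.comp_app] at h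
    exact epi_of_epi ((factorThruImage φ).app X) _
  · have h := hρ₂ X
    rw [← e₂, NatTrans.comp_app] at h
    exact epi_of_epi ((factorThruImage φ).app X) _
end

section
/- Let C be a small category and A an abelian category. Suppose E : Cᵒᵖ ⥤ A is a functor with E.map g an epimorphism for every morphism g, M : C ⥤ A is a functor with M.map g a monomorphism for every morphism g, and I is a family of morphisms I_c : E(c) ⟶ M(c), one for each object c of C, such that for every morphism g : c ⟶ d of C one has I_d = E.map g.op ≫ I_c ≫ M.map g. Then there exists a functor L : C ⥤ A with L.map g an isomorphism for every morphism g, together with, for each object c, a monomorphism μ_c : L(c) ⟶ M(c) and an epimorphism q_c : E(c) ⟶ L(c), such that q_c ≫ μ_c = I_c for every object c, and such that for every morphism g : c ⟶ d of C one has L.map g ≫ μ_d = μ_c ≫ M.map g and E.map g.op ≫ q_c ≫ L.map g = q_d. -/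
/-!
Take `L c` to be the image of `I c`, with `q c` and `μ c` its epi-mono factorisation. For
`g : c ⟶ d`, the identity `I d = E.map g.op ≫ I c ≫ M.map g` gives two factorisations of `I d`
into an epimorphism followed by a monomorphism: one through `image (I d)`, and one through
`image (I c)`, given by `E.map g.op ≫ q c` and `μ c ≫ M.map g`. The comparison map between
them is an isomorphism, and is taken as `L.map g`. Functoriality follows by cancelling the
monomorphisms `μ`.
-/

open CategoryTheory CategoryTheory.Limits Opposite

universe u v w

/-- Two epi-mono factorisations of the same morphism in an abelian category are related by a
comparison isomorphism. -/
theorem exists_isIso_of_epi_mono_fac {A : Type v} [Category.{w} A] [Abelian A]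
    {X Y P Q : A} (e : X ⟶ P) (m : P ⟶ Y) (e' : X ⟶ Q) (m' : Q ⟶ Y)
    [Epi e] [Mono m] [Epi e'] [Mono m'] (h : e ≫ m = e' ≫ m') :
    ∃ l : P ⟶ Q, IsIso l ∧ e ≫ l = e' ∧ l ≫ m' = m := by
  have sq : CommSq e' e m' m := ⟨h.symm⟩
  have : StrongEpi e := strongEpi_of_epi e
  have : Epi sq.lift := epi_of_epi_fac sq.fac_left
  have : Mono sq.lift := mono_of_mono_fac sq.fac_right
  exact ⟨sq.lift, isIso_of_mono_of_epi _, sq.fac_left, sq.fac_right⟩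

theorem persistent_local_system_of_isobisheaf
    {C : Type u} [SmallCategory C] {A : Type v} [Category.{w} A] [Abelian A]
    (E : Cᵒᵖ ⥤ A) (M : C ⥤ A)
    (hE : ∀ (X Y : Cᵒᵖ) (g : X ⟶ Y), Epi (E.map g))
    (hM : ∀ (X Y : C) (g : X ⟶ Y), Mono (M.map g))
    (I : ∀ c : C, E.obj (op c) ⟶ M.obj c)
    (hI : ∀ (c d : C) (g : c ⟶ d), I d = E.map g.op ≫ I c ≫ M.map g) :
    ∃ (L : C ⥤ A) (μ : ∀ c : C, L.obj c ⟶ M.obj c) (q : ∀ c : C, E.obj (op c) ⟶ L.obj c),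
      (∀ (c d : C) (g : c ⟶ d), IsIso (L.map g)) ∧
      (∀ c, Mono (μ c)) ∧
      (∀ c, Epi (q c)) ∧
      (∀ c, q c ≫ μ c = I c) ∧
      (∀ (c d : C) (g : c ⟶ d), L.map g ≫ μ d = μ c ≫ M.map g) ∧
      (∀ (c d : C) (g : c ⟶ d), E.map g.op ≫ q c ≫ L.map g = q d) := by
  have key : ∀ (c d : C) (g : c ⟶ d), ∃ l : image (I c) ⟶ image (I d), IsIso l ∧
      (E.map g.op ≫ factorThruImage (I c)) ≫ l = factorThruImage (I d) ∧
      l ≫ image.ι (I d) = image.ι (I c) ≫ M.map g := by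
    intro c d g
    have := hE _ _ g.op
    have := hM _ _ g
    apply exists_isIso_of_epi_mono_fac
    simp [← hI c d g]
  choose l hl hq hμ using key
  refine ⟨{ obj := fun c => image (I c)
            map := fun {c d} g => l c d g
            map_id := fun c => ?_
            map_comp := fun {a b c} f g => ?_ },
    fun c => image.ι (I c), fun c => factorThruImage (I c), hl, fun c => inferInstance,
    fun c => inferInstance, fun c => image.fac (I c), hμ,
    fun c d g => by simpa using hq c d g⟩
  · rw [← cancel_mono (image.ι (I c)), hμ]
    simp
  · rw [← cancel_mono (image.ι (I c)), hμ, Category.assoc, hμ, ← Category.assoc, hμ]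
    simp
end

section
/- Let C be a small category, 𝔽 a field, and F : Cᵒᵖ ⥤ FGModuleCat 𝔽 a functor valued in finite-dimensional 𝔽-vector spaces. Then F admits a greatest sub-episheaf: there exists a sub-episheaf (E, ι) of F such that for every sub-episheaf (E', ι') of F there is a natural transformation h : E' ⟶ E, with all components monomorphisms, satisfying h ≫ ι = ι'. -/
/-!
Call a family `W X ≤ F X` of subspaces *stable* if `F f` maps `W X` onto `W Y` for every
`f : X ⟶ Y` in `Cᵒᵖ`. Stable families are exactly the images of sub-episheaves of `F`. Since taking
images under a linear map commutes with arbitrary suprema of subspaces, the pointwise supremum of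
all stable families is again stable (`map_greatestStable`). It is therefore the greatest stable
family, and the functor it defines is the greatest sub-episheaf: the inclusion of any other
sub-episheaf factors through it because its image is stable. Taking the supremum of all stable
families at once replaces the combination of binary joins with Zorn's lemma.
-/

open CategoryTheory CategoryTheory.Limits

universe u v w

section

variable {C : Type u} [SmallCategory C] {𝔽 : Type v} [Field 𝔽]

/-- Epimorphisms of finite-dimensional spaces are surjective, as the forgetful functor to all
vector spaces preserves finite colimits. -/
lemma FGModuleCat.surjective_of_epi {V W : FGModuleCat.{w} 𝔽} (f : V ⟶ W) [Epi f] :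
    Function.Surjective f.hom.hom :=
  (ModuleCat.epi_iff_surjective _).1
    (inferInstanceAs (Epi ((forget₂ (FGModuleCat.{w} 𝔽) (ModuleCat.{w} 𝔽)).map f)))

/-- Monomorphisms of finite-dimensional spaces are injective, as the forgetful functor to all
vector spaces preserves finite limits. -/
lemma FGModuleCat.injective_of_mono {V W : FGModuleCat.{w} 𝔽} (f : V ⟶ W) [Mono f] :
    Function.Injective f.hom.hom :=
  (ModuleCat.mono_iff_injective _).1
    (inferInstanceAs (Mono ((forget₂ (FGModuleCat.{w} 𝔽) (ModuleCat.{w} 𝔽)).map f)))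

lemma FGModuleCat.epi_of_surjective {V W : FGModuleCat.{w} 𝔽} (f : V ⟶ W)
    (hf : Function.Surjective f.hom.hom) : Epi f :=
  (forget₂ (FGModuleCat.{w} 𝔽) (ModuleCat.{w} 𝔽)).epi_of_epi_map
    ((ModuleCat.epi_iff_surjective _).2 hf)

lemma FGModuleCat.mono_of_injective {V W : FGModuleCat.{w} 𝔽} (f : V ⟶ W)
    (hf : Function.Injective f.hom.hom) : Mono f :=
  (forget₂ (FGModuleCat.{w} 𝔽) (ModuleCat.{w} 𝔽)).mono_of_mono_map
    ((ModuleCat.mono_iff_injective _).2 hf)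

variable (F : Cᵒᵖ ⥤ FGModuleCat.{w} 𝔽)

/-- A family of subspaces `W X ≤ F X` is stable if every `F f : F X ⟶ F Y` maps `W X` onto `W Y`;
such families encode the sub-episheaves of `F`. -/
def IsStableFamily (W : ∀ X, Submodule 𝔽 (F.obj X)) : Prop :=
  ∀ (X Y : Cᵒᵖ) (f : X ⟶ Y), (W X).map (F.map f).hom.hom = W Y

/-- The pointwise supremum of all stable families of subspaces. -/
def greatestStable (X : Cᵒᵖ) : Submodule 𝔽 (F.obj X) :=
  ⨆ W : {W // IsStableFamily F W}, W.1 X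

lemma map_greatestStable {X Y : Cᵒᵖ} (f : X ⟶ Y) :
    (greatestStable F X).map (F.map f).hom.hom = greatestStable F Y := by
  unfold greatestStable
  rw [Submodule.map_iSup]
  exact iSup_congr fun W => W.2 X Y f

lemma map_mem_greatestStable {X Y : Cᵒᵖ} (f : X ⟶ Y) (x : F.obj X)
    (hx : x ∈ greatestStable F X) : (F.map f).hom.hom x ∈ greatestStable F Y :=
  map_greatestStable F f ▸ Submodule.mem_map_of_mem hx

/-- The greatest stable family, as a functor: the epification of `F`. -/
def epification : Cᵒᵖ ⥤ FGModuleCat.{w} 𝔽 where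
  obj X := FGModuleCat.of 𝔽 (greatestStable F X)
  map f := FGModuleCat.ofHom ((F.map f).hom.hom.restrict (map_mem_greatestStable F f))
  map_id X := by
    ext x
    change (F.map (𝟙 X)).hom.hom x.1 = x.1
    rw [F.map_id]
    rfl
  map_comp {X Y Z} f g := by
    ext x
    change (F.map (f ≫ g)).hom.hom x.1 = (F.map g).hom.hom ((F.map f).hom.hom x.1)
    rw [F.map_comp]
    rfl

/-- The inclusion of the epification into `F`. -/
def epificationι : epification F ⟶ F where
  app X := FGModuleCat.ofHom (greatestStable F X).subtype
  naturality _ _ _ := rfl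

variable {F} in
lemma app_map_apply {E : Cᵒᵖ ⥤ FGModuleCat.{w} 𝔽} (ι : E ⟶ F) {X Y : Cᵒᵖ} (f : X ⟶ Y)
    (x : E.obj X) :
    (ι.app Y).hom.hom ((E.map f).hom.hom x) = (F.map f).hom.hom ((ι.app X).hom.hom x) :=
  congrArg (fun g => g.hom.hom x) (ι.naturality f)

variable {F} in
/-- The image of an episheaf in `F` is a stable family. -/
lemma isStableFamily_range {E : Cᵒᵖ ⥤ FGModuleCat.{w} 𝔽} (ι : E ⟶ F)
    (hE : ∀ (X Y : Cᵒᵖ) (f : X ⟶ Y), Epi (E.map f)) :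
    IsStableFamily F fun X => LinearMap.range (ι.app X).hom.hom := by
  intro X Y f
  apply le_antisymm
  · rintro _ ⟨_, ⟨x, rfl⟩, rfl⟩
    exact ⟨(E.map f).hom.hom x, app_map_apply ι f x⟩
  · rintro _ ⟨y, rfl⟩
    have := hE X Y f
    obtain ⟨x, rfl⟩ := FGModuleCat.surjective_of_epi (E.map f) y
    exact ⟨_, ⟨x, rfl⟩, (app_map_apply ι f x).symm⟩

end

theorem exists_greatest_sub_episheaf
    {C : Type u} [SmallCategory C] (𝔽 : Type v) [Field 𝔽]
    (F : Cᵒᵖ ⥤ FGModuleCat 𝔽) :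
    ∃ (E : Cᵒᵖ ⥤ FGModuleCat 𝔽) (ι : E ⟶ F),
      (∀ (X Y : Cᵒᵖ) (f : X ⟶ Y), Epi (E.map f)) ∧
      (∀ X, Mono (ι.app X)) ∧
      ∀ (E' : Cᵒᵖ ⥤ FGModuleCat 𝔽) (ι' : E' ⟶ F),
        (∀ (X Y : Cᵒᵖ) (f : X ⟶ Y), Epi (E'.map f)) →
        (∀ X, Mono (ι'.app X)) →
        ∃ h : E' ⟶ E, (∀ X, Mono (h.app X)) ∧ h ≫ ι = ι' := by
  refine ⟨epification F, epificationι F, fun X Y f => ?_, fun X => ?_, fun E' ι' hE' hι' => ?_⟩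
  · apply FGModuleCat.epi_of_surjective
    rintro ⟨y, hy⟩
    rw [← map_greatestStable F f] at hy
    obtain ⟨x, hx, rfl⟩ := hy
    exact ⟨⟨x, hx⟩, rfl⟩
  · exact FGModuleCat.mono_of_injective _ Subtype.val_injective
  · have hmem (X : Cᵒᵖ) (x : E'.obj X) : (ι'.app X).hom.hom x ∈ greatestStable F X :=
      le_iSup (fun W : {W // IsStableFamily F W} => W.1 X)
        ⟨_, isStableFamily_range ι' hE'⟩ ⟨x, rfl⟩
    let h : E' ⟶ epification F :=
      { app X := FGModuleCat.ofHom ((ι'.app X).hom.hom.codRestrict (greatestStable F X) (hmem X))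
        naturality X Y f := by
          ext x
          exact Subtype.ext (app_map_apply ι' f x) }
    have hh : h ≫ epificationι F = ι' := rfl
    refine ⟨h, fun X => ?_, hh⟩
    have : Mono (h.app X ≫ (epificationι F).app X) := by
      rw [← NatTrans.comp_app, hh]
      exact hι' X
    exact mono_of_mono _ ((epificationι F).app X)
end

section
/- Let C be a small category, 𝔽 a field, and F : C ⥤ FGModuleCat 𝔽 a functor valued in finite-dimensional 𝔽-vector spaces. Then F admits a least quotient-monocosheaf: there exists a quotient-monocosheaf (M, ρ) of F such that for every quotient-monocosheaf (M', ρ') of F there is a natural transformation h : M ⟶ M', with all components epimorphisms, satisfying ρ ≫ h = ρ'. -/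
/-!
Quotients of `F` that are monocosheaves correspond to the *saturated* families of subspaces
`S X ≤ F X`, those with `x ∈ S X ↔ F f x ∈ S Y` for all `f : X ⟶ Y`: the implication `→` makes
`F / S` a functor and `←` makes its transition maps injective. Conversely the kernels of the
components of any map from `F` to a monocosheaf form such a family. Saturation is preserved by
arbitrary intersections, so the quotient of `F` by the intersection `K` of all saturated families
is a monocosheaf, and any `ρ' : F ⟶ M'` with `M'` a monocosheaf factors through it because
`K ≤ ker ρ'`. The factor is epi as soon as `ρ'` is. Taking the intersection of all saturated families
at once makes Zorn's lemma unnecessary.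
-/

open CategoryTheory CategoryTheory.Limits

universe u v

namespace Monofication

universe w

variable {C : Type u} [SmallCategory C] {𝔽 : Type v} [Field 𝔽]

/-- A family of subspaces of the values of `F` is saturated if each `S X` is exactly the preimage
of `S Y` under `F.map f`, for every `f : X ⟶ Y`. -/
def Saturated (F : C ⥤ FGModuleCat.{w} 𝔽) (S : ∀ X, Submodule 𝔽 (F.obj X)) : Prop :=
  ∀ (X Y : C) (f : X ⟶ Y), S X = (S Y).comap (F.map f).hom.hom

/-- The smallest saturated family: the intersection of all of them. -/
def K (F : C ⥤ FGModuleCat.{w} 𝔽) (X : C) : Submodule 𝔽 (F.obj X) :=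
  ⨅ S : {S // Saturated F S}, S.1 X

lemma K_saturated (F : C ⥤ FGModuleCat.{w} 𝔽) : Saturated F (K F) := by
  intro X Y f
  rw [K, K, Submodule.comap_iInf]
  exact iInf_congr fun S => S.2 X Y f

lemma K_le (F : C ⥤ FGModuleCat.{w} 𝔽) {S : ∀ X, Submodule 𝔽 (F.obj X)} (hS : Saturated F S)
    (X : C) : K F X ≤ S X :=
  iInf_le (fun S : {S // Saturated F S} => S.1 X) ⟨S, hS⟩

/-- Proved by testing `f` against the inclusion of its kernel, which is again
finite-dimensional. -/
lemma ker_eq_bot_of_mono {V W : FGModuleCat.{w} 𝔽} (f : V ⟶ W) [Mono f] :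
    LinearMap.ker f.hom.hom = ⊥ := by
  let i : FGModuleCat.of 𝔽 (LinearMap.ker f.hom.hom) ⟶ V :=
    FGModuleCat.ofHom (LinearMap.ker f.hom.hom).subtype
  have h : i ≫ f = 0 ≫ f := by
    rw [zero_comp]
    ext x
    exact x.2
  have h0 : i = 0 := (cancel_mono f).1 h
  rw [eq_bot_iff]
  intro x hx
  exact congrArg (fun g : FGModuleCat.of 𝔽 (LinearMap.ker f.hom.hom) ⟶ V =>
    g.hom.hom ⟨x, hx⟩) h0

/-- The quotient cosheaf `F / K`. -/
noncomputable def quotient (F : C ⥤ FGModuleCat.{w} 𝔽) : C ⥤ FGModuleCat.{w} 𝔽 where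
  obj X := FGModuleCat.of 𝔽 (F.obj X ⧸ K F X)
  map {X Y} f := FGModuleCat.ofHom
    ((K F X).mapQ (K F Y) (F.map f).hom.hom (K_saturated F X Y f).le)
  map_id X := by
    apply FGModuleCat.hom_ext
    apply Submodule.linearMap_qext
    ext x
    exact congrArg (fun g : F.obj X ⟶ F.obj X => (K F X).mkQ (g.hom.hom x)) (F.map_id X)
  map_comp {X Y Z} f g := by
    apply FGModuleCat.hom_ext
    apply Submodule.linearMap_qext
    ext x
    exact congrArg (fun g : F.obj X ⟶ F.obj Z => (K F Z).mkQ (g.hom.hom x)) (F.map_comp f g)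

/-- The projection `F ⟶ F / K`. -/
noncomputable def proj (F : C ⥤ FGModuleCat.{w} 𝔽) : F ⟶ quotient F where
  app X := FGModuleCat.ofHom (K F X).mkQ
  naturality _ _ _ := rfl

lemma quotient_map_mono (F : C ⥤ FGModuleCat.{w} 𝔽) {X Y : C} (f : X ⟶ Y) :
    Mono ((quotient F).map f) := by
  apply ConcreteCategory.mono_of_injective
  change Function.Injective
    ((K F X).mapQ (K F Y) (F.map f).hom.hom (K_saturated F X Y f).le)
  rw [← LinearMap.ker_eq_bot, Submodule.mapQ, Submodule.ker_liftQ_eq_bot']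
  rw [LinearMap.ker_comp, Submodule.ker_mkQ]
  exact K_saturated F X Y f

lemma proj_app_epi (F : C ⥤ FGModuleCat.{w} 𝔽) (X : C) : Epi ((proj F).app X) :=
  ConcreteCategory.epi_of_surjective _ (K F X).mkQ_surjective

lemma ker_saturated {F M : C ⥤ FGModuleCat.{w} 𝔽} (ρ : F ⟶ M)
    (hM : ∀ (X Y : C) (f : X ⟶ Y), Mono (M.map f)) :
    Saturated F fun X => LinearMap.ker (ρ.app X).hom.hom := by
  intro X Y f
  have := hM X Y f
  have h : (ρ.app Y).hom.hom ∘ₗ (F.map f).hom.hom = (M.map f).hom.hom ∘ₗ (ρ.app X).hom.hom :=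
    congrArg (fun g : F.obj X ⟶ M.obj Y => g.hom.hom) (ρ.naturality f)
  rw [← LinearMap.ker_comp, h, LinearMap.ker_comp, ker_eq_bot_of_mono, Submodule.comap_bot]

/-- The factorization through `F / K` of a map from `F` to a monocosheaf. -/
noncomputable def desc {F M : C ⥤ FGModuleCat.{w} 𝔽} (ρ : F ⟶ M)
    (hM : ∀ (X Y : C) (f : X ⟶ Y), Mono (M.map f)) : quotient F ⟶ M where
  app X := FGModuleCat.ofHom
    ((K F X).liftQ (ρ.app X).hom.hom (K_le F (ker_saturated ρ hM) X))
  naturality X Y f := by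
    apply FGModuleCat.hom_ext
    apply Submodule.linearMap_qext
    ext x
    exact congrArg (fun g : F.obj X ⟶ M.obj Y => g.hom.hom x) (ρ.naturality f)

lemma proj_desc {F M : C ⥤ FGModuleCat.{w} 𝔽} (ρ : F ⟶ M)
    (hM : ∀ (X Y : C) (f : X ⟶ Y), Mono (M.map f)) : proj F ≫ desc ρ hM = ρ := by
  ext X x
  rfl

end Monofication

theorem exists_least_quotient_monocosheaf
    {C : Type u} [SmallCategory C] (𝔽 : Type v) [Field 𝔽]
    (F : C ⥤ FGModuleCat 𝔽) :
    ∃ (M : C ⥤ FGModuleCat 𝔽) (ρ : F ⟶ M),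
      (∀ (X Y : C) (f : X ⟶ Y), Mono (M.map f)) ∧
      (∀ X, Epi (ρ.app X)) ∧
      ∀ (M' : C ⥤ FGModuleCat 𝔽) (ρ' : F ⟶ M'),
        (∀ (X Y : C) (f : X ⟶ Y), Mono (M'.map f)) →
        (∀ X, Epi (ρ'.app X)) →
        ∃ h : M ⟶ M', (∀ X, Epi (h.app X)) ∧ ρ ≫ h = ρ' := by
  refine ⟨Monofication.quotient F, Monofication.proj F,
    fun X Y f => Monofication.quotient_map_mono F f, Monofication.proj_app_epi F,
    fun M' ρ' hM' hρ' => ⟨Monofication.desc ρ' hM', fun X => ?_, Monofication.proj_desc ρ' hM'⟩⟩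
  have := hρ' X
  exact epi_of_epi_fac (congrArg (fun t => t.app X) (Monofication.proj_desc ρ' hM'))
end

section
/- Let P be a preorder and 𝔽 a field. Let (V, T) be a contravariantly functorial family over P: for each p ∈ P a finite-dimensional 𝔽-vector space V p, and for each pair p ≤ q a linear map T p q : V q →ₗ[𝔽] V p, with T p p = id and T p q ∘ T q r = T p r whenever p ≤ q ≤ r. Suppose E is a sub-episheaf of (V, T), i.e. a family of submodules E p ≤ V p with Submodule.map (T p q) (E q) = E p for all p ≤ q. Let G be any family of submodules G p ≤ V p with E p ≤ G p for all p. Define G' p = ⨅_{q : p ≤ q} Submodule.map (T p q) (G q) and G'' p = ⨅_{r : r ≤ p} Submodule.comap (T r p) (G' r). Then E p ≤ G'' p for all p ∈ P. -/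
universe u v w

theorem epification_step_contains_sub_episheaf
    {P : Type u} [Preorder P] (𝔽 : Type v) [Field 𝔽]
    (V : P → Type w) [∀ p, AddCommGroup (V p)] [∀ p, Module 𝔽 (V p)]
    [∀ p, FiniteDimensional 𝔽 (V p)]
    (T : ∀ p q : P, p ≤ q → (V q →ₗ[𝔽] V p))
    (hTid : ∀ p, T p p le_rfl = LinearMap.id)
    (hTcomp : ∀ (p q r : P) (hpq : p ≤ q) (hqr : q ≤ r),
      (T p q hpq).comp (T q r hqr) = T p r (hpq.trans hqr))
    (E : ∀ p, Submodule 𝔽 (V p))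
    (hE : ∀ (p q : P) (h : p ≤ q), Submodule.map (T p q h) (E q) = E p)
    (G : ∀ p, Submodule 𝔽 (V p))
    (hEG : ∀ p, E p ≤ G p) :
    ∀ p : P, E p ≤
      ⨅ (r : P) (hrp : r ≤ p), Submodule.comap (T r p hrp)
        (⨅ (q : P) (hrq : r ≤ q), Submodule.map (T r q hrq) (G q)) := by
  intro p
  refine le_iInf₂ fun r hrp => Submodule.map_le_iff_le_comap.mp ?_
  -- `T r p` carries `E p` onto `E r`, which is also the image of `E q ≤ G q` for every `q ≥ r`.
  rw [hE r p hrp]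
  refine le_iInf₂ fun q hrq => ?_
  rw [← hE r q hrq]
  exact Submodule.map_mono (hEG q)
end

section
/- Let P be a preorder and 𝔽 a field. Let (V, S) be a covariantly functorial family over P: for each p ∈ P a finite-dimensional 𝔽-vector space V p, and for each pair p ≤ q a linear map S p q : V p →ₗ[𝔽] V q, with S p p = id and S q r ∘ S p q = S p r whenever p ≤ q ≤ r. Suppose N is the kernel family of a quotient-monocosheaf of (V, S), i.e. a family of submodules N p ≤ V p with Submodule.comap (S p q) (N q) = N p for all p ≤ q. Let K be any family of submodules K p ≤ V p with K p ≤ N p for all p. Define K' p = ⨆_{q : p ≤ q} Submodule.comap (S p q) (K q) and K'' p = ⨆_{r : r ≤ p} Submodule.map (S r p) (K' r). Then K'' p ≤ N p for all p ∈ P. -/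
universe u v w

theorem monofication_step_le_quotient_monocosheaf_kernel
    {P : Type u} [Preorder P] (𝔽 : Type v) [Field 𝔽]
    (V : P → Type w) [∀ p, AddCommGroup (V p)] [∀ p, Module 𝔽 (V p)]
    [∀ p, FiniteDimensional 𝔽 (V p)]
    (S : ∀ p q : P, p ≤ q → (V p →ₗ[𝔽] V q))
    (hSid : ∀ p, S p p le_rfl = LinearMap.id)
    (hScomp : ∀ (p q r : P) (hpq : p ≤ q) (hqr : q ≤ r),
      (S q r hqr).comp (S p q hpq) = S p r (hpq.trans hqr))
    (N : ∀ p, Submodule 𝔽 (V p))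
    (hN : ∀ (p q : P) (h : p ≤ q), Submodule.comap (S p q h) (N q) = N p)
    (K : ∀ p, Submodule 𝔽 (V p))
    (hKN : ∀ p, K p ≤ N p) :
    ∀ p : P,
      (⨆ (r : P) (hrp : r ≤ p), Submodule.map (S r p hrp)
        (⨆ (q : P) (hrq : r ≤ q), Submodule.comap (S r q hrq) (K q))) ≤ N p := by
  intro p
  refine iSup₂_le fun r hrp => ?_
  -- By adjunction and `hN`, the image of the inner supremum lies in `N p` once the supremum lies in `N r`.
  rw [Submodule.map_le_iff_le_comap, hN r p hrp]
  exact iSup₂_le fun q hrq => (Submodule.comap_mono (hKN q)).trans (hN r q hrq).le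
end
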